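/- Let n ≥ 1, let β : ℝ^{1+n} → ℂ be continuous with compact support, and let ω ∈ ℝⁿ be a unit vector. If ∫_{ℝ^{1+n}} β(t,x) φ(x + tω)² dx dt = 0 for every smooth compactly supported φ : ℝⁿ → ℝ, then ∫_ℝ β(t, y − tω) dt = 0 for every y ∈ ℝⁿ. -/

import Mathlib

open MeasureTheory
open scoped RealInnerProductSpace

/-!
The shear `(t, y) ↦ (t, y - tω)` preserves the product measure, so Fubini turns the hypothesis
into `∫ φ(y)² F(y) dy = 0` for all test functions `φ`, where `F` is the light ray transform of `β`.
Squares of test functions span all test functions by polarization: if the test function `ψ` is `1`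
on the support of `g`, then `g = gψ = ((g + ψ) / 2)² - ((g - ψ) / 2)²`. Hence `F = 0` almost
everywhere, and everywhere because `F` is continuous.
-/

section SquaresOfTestFunctions

variable {E : Type*} [NormedAddCommGroup E] [NormedSpace ℝ E] [FiniteDimensional ℝ E]

theorem exists_contDiff_hasCompactSupport_eqOn_one {K : Set E} (hK : IsCompact K) (n : ℕ∞) :
    ∃ ψ : E → ℝ, ContDiff ℝ n ψ ∧ HasCompactSupport ψ ∧ Set.EqOn ψ 1 K := by
  obtain ⟨r, r_pos, hKr⟩ := hK.isBounded.subset_closedBall_lt 0 (0 : E)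
  let bump : ContDiffBump (0 : E) := ⟨r, r + 1, r_pos, lt_add_one r⟩
  exact ⟨bump, bump.contDiff, bump.hasCompactSupport,
    fun x hx ↦ bump.one_of_mem_closedBall (hKr hx)⟩

theorem exists_contDiff_hasCompactSupport_eq_sq_sub_sq {n : ℕ∞} {g : E → ℝ}
    (hg : ContDiff ℝ n g) (hgs : HasCompactSupport g) :
    ∃ a b : E → ℝ, (ContDiff ℝ n a ∧ HasCompactSupport a) ∧
      (ContDiff ℝ n b ∧ HasCompactSupport b) ∧ ∀ x, g x = a x ^ 2 - b x ^ 2 := by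
  obtain ⟨ψ, hψ, hψs, hψ_one⟩ := exists_contDiff_hasCompactSupport_eqOn_one hgs.isCompact n
  have g_mul_ψ (x : E) : g x * ψ x = g x := by
    by_cases hx : x ∈ tsupport g
    · rw [hψ_one hx, Pi.one_apply, mul_one]
    · rw [image_eq_zero_of_notMem_tsupport hx, zero_mul]
  refine ⟨fun x ↦ (g x + ψ x) / 2, fun x ↦ (g x - ψ x) / 2,
    ⟨(hg.add hψ).div_const 2, (hgs.add hψs).comp_left (g := (· / 2)) (zero_div 2)⟩,
    ⟨(hg.sub hψ).div_const 2, (hgs.sub hψs).comp_left (g := (· / 2)) (zero_div 2)⟩,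
    fun x ↦ ?_⟩
  linear_combination -g_mul_ψ x

theorem ae_eq_zero_of_integral_contDiff_sq_smul_eq_zero [MeasurableSpace E] [BorelSpace E]
    {F : Type*} [NormedAddCommGroup F] [NormedSpace ℝ F] [CompleteSpace F]
    {f : E → F} {μ : Measure E} (hf : LocallyIntegrable f μ)
    (h : ∀ φ : E → ℝ, ContDiff ℝ (⊤ : ℕ∞) φ → HasCompactSupport φ → ∫ x, φ x ^ 2 • f x ∂μ = 0) :
    ∀ᵐ x ∂μ, f x = 0 := by
  have integrable_sq_smul {φ : E → ℝ} (hφ : ContDiff ℝ (⊤ : ℕ∞) φ) (hφs : HasCompactSupport φ) :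
      Integrable (fun x ↦ φ x ^ 2 • f x) μ :=
    hf.integrable_smul_left_of_hasCompactSupport (hφ.continuous.pow 2)
      (hφs.comp_left (g := (· ^ 2)) (zero_pow two_ne_zero))
  refine ae_eq_zero_of_integral_contDiff_smul_eq_zero hf fun g hg hgs ↦ ?_
  obtain ⟨a, b, ⟨ha, has⟩, ⟨hb, hbs⟩, g_eq⟩ :=
    exists_contDiff_hasCompactSupport_eq_sq_sub_sq hg hgs
  simp only [g_eq, sub_smul]
  rw [integral_sub (integrable_sq_smul ha has) (integrable_sq_smul hb hbs), h a ha has,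
    h b hb hbs, sub_zero]

end SquaresOfTestFunctions

section LightRayTransform

variable {E F : Type*} [NormedAddCommGroup E] [NormedSpace ℝ E]
  [NormedAddCommGroup F] [NormedSpace ℝ F]

/-- The light ray transform of `β` in direction `ω`, as a function of the point `y` at which the
ray `t ↦ (t, y - tω)` meets the hyperplane `t = 0`. The direction is not normalized. -/
noncomputable def lightRayTransform (ω : E) (β : ℝ × E → F) (y : E) : F :=
  ∫ t : ℝ, β (t, y - t • ω)

/-- The shear `(t, y) ↦ (t, y - tω)` of `ℝ × E`, which straightens the light rays in direction `ω`:
it maps the line `ℝ × {y}` to the ray through `(0, y)`. -/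
def lightRayShear (ω : E) : ℝ × E ≃ₜ ℝ × E where
  toFun z := (z.1, z.2 - z.1 • ω)
  invFun z := (z.1, z.2 + z.1 • ω)
  left_inv z := by simp
  right_inv z := by simp
  continuous_toFun := by fun_prop
  continuous_invFun := by fun_prop

theorem continuous_lightRayTransform (ω : E) {β : ℝ × E → F} (hβ : Continuous β)
    (hβs : HasCompactSupport β) : Continuous (lightRayTransform ω β) := by
  have vanishes_off_times (y : E) (t : ℝ) (ht : t ∉ Prod.fst '' tsupport β) :
      β (t, y - t • ω) = 0 :=
    image_eq_zero_of_notMem_tsupport fun hmem ↦ ht ⟨_, hmem, rfl⟩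
  rw [← continuousOn_univ]
  exact continuousOn_integral_of_compact_support (hβs.isCompact.image continuous_fst)
    (f := fun y t ↦ β (t, y - t • ω)) (by unfold Function.uncurry; fun_prop)
    fun y t _ ↦ vanishes_off_times y t

variable [MeasurableSpace E] [BorelSpace E] [SecondCountableTopology E]
  {μ : Measure E} [SFinite μ] [μ.IsAddRightInvariant]

theorem measurePreserving_lightRayShear (ω : E) :
    MeasurePreserving (lightRayShear ω) (volume.prod μ) (volume.prod μ) :=
  (MeasurePreserving.id volume).skew_product (g := fun t y ↦ y - t • ω)
    (by unfold Function.uncurry; fun_prop)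
    (Filter.Eventually.of_forall fun t ↦ map_sub_right_eq_self μ (t • ω))

theorem integral_smul_eq_integral_smul_lightRayTransform [IsFiniteMeasureOnCompacts μ] (ω : E)
    {β : ℝ × E → F} (hβ : Continuous β) (hβs : HasCompactSupport β)
    {φ : E → ℝ} (hφ : Continuous φ) :
    ∫ z, φ (z.2 + z.1 • ω) • β z ∂(volume.prod μ) = ∫ y, φ y • lightRayTransform ω β y ∂μ := by
  have sheared_integrable :
      Integrable (fun z : ℝ × E ↦ φ z.2 • β (lightRayShear ω z)) (volume.prod μ) :=
    ((hφ.comp continuous_snd).smul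
      (hβ.comp (lightRayShear ω).continuous)).integrable_of_hasCompactSupport
      (hβs.comp_homeomorph (lightRayShear ω)).smul_left
  calc ∫ z, φ (z.2 + z.1 • ω) • β z ∂(volume.prod μ)
      = ∫ z, φ z.2 • β (lightRayShear ω z) ∂(volume.prod μ) := by
        rw [← (measurePreserving_lightRayShear ω).integral_comp
          (lightRayShear ω).measurableEmbedding]
        simp [lightRayShear]
    _ = ∫ y, (∫ t : ℝ, φ y • β (t, y - t • ω)) ∂μ := integral_prod_symm _ sheared_integrable
    _ = ∫ y, φ y • lightRayTransform ω β y ∂μ := by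
        simp only [integral_smul, lightRayTransform]

end LightRayTransform

theorem statement6_general {E F : Type*} [NormedAddCommGroup E] [NormedSpace ℝ E]
    [FiniteDimensional ℝ E] [MeasurableSpace E] [BorelSpace E]
    [NormedAddCommGroup F] [NormedSpace ℝ F] [CompleteSpace F]
    (μ : Measure E) [μ.IsAddHaarMeasure] {β : ℝ × E → F}
    (hβ : Continuous β) (hβs : HasCompactSupport β) (ω : E)
    (h : ∀ φ : E → ℝ, ContDiff ℝ (⊤ : ℕ∞) φ → HasCompactSupport φ →
      ∫ z, φ (z.2 + z.1 • ω) ^ 2 • β z ∂(volume.prod μ) = 0) (y : E) :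
    ∫ t : ℝ, β (t, y - t • ω) = 0 := by
  have : ProperSpace E := FiniteDimensional.proper_real E
  have transform_continuous := continuous_lightRayTransform ω hβ hβs
  have transform_ae_zero : lightRayTransform ω β =ᵐ[μ] 0 :=
    ae_eq_zero_of_integral_contDiff_sq_smul_eq_zero transform_continuous.locallyIntegrable
      fun φ hφ hφs ↦ (integral_smul_eq_integral_smul_lightRayTransform ω hβ hβs
        (hφ.continuous.pow 2)).symm.trans (h φ hφ hφs)
  exact congrFun ((transform_continuous.ae_eq_iff_eq μ continuous_zero).1 transform_ae_zero) y

/-- Let `β : ℝ^{1+n} → ℂ` be continuous with compact support and `ω` a unit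
vector of `ℝⁿ`.  If `∫ β(t,x) φ(x + tω)² dx dt = 0` for every smooth compactly supported
`φ : ℝⁿ → ℝ`, then the light ray transform `∫ β(t, y − tω) dt` vanishes for every `y`. -/
theorem statement6 (n : ℕ) (hn : 1 ≤ n)
    (β : ℝ × EuclideanSpace ℝ (Fin n) → ℂ)
    (hβc : Continuous β) (hβs : HasCompactSupport β)
    (ω : EuclideanSpace ℝ (Fin n)) (hω : ‖ω‖ = 1)
    (h : ∀ φ : EuclideanSpace ℝ (Fin n) → ℝ, ContDiff ℝ (⊤ : ℕ∞) φ → HasCompactSupport φ →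
      (∫ z : ℝ × EuclideanSpace ℝ (Fin n),
        β z * ((φ (z.2 + z.1 • ω) : ℝ) : ℂ) ^ 2) = 0) :
    ∀ y : EuclideanSpace ℝ (Fin n), (∫ t : ℝ, β (t, y - t • ω)) = 0 := by
  exact statement6_general volume hβc hβs ω fun φ hφ hφs ↦ by
    simpa [Measure.volume_eq_prod, Complex.real_smul, mul_comm] using h φ hφ hφs
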